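/- arXiv:1904.11211 — 2 statements merged into one kernel-verified Lean document; each statement's English description precedes it below -/
import Mathlib

section
/- Let V be a finite-dimensional complex inner product space and let C be a linear operator on V with adjoint C*. Then for any u, v ∈ V, u − Cv belongs to the range of 1 − CC* if and only if v − C*u belongs to the range of 1 − C*C. -/
/-!
Both conditions say that the block system `x + C y = u`, `y + C* x = v` is solvable: eliminating
`y` leaves `(1 - C C*) x = u - C v`, and eliminating `x` leaves `(1 - C* C) y = v - C* u`.
-/

section

variable {R M N : Type*} [Semiring R] [AddCommGroup M] [Module R M] [AddCommGroup N] [Module R N]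
  (C : N →ₗ[R] M) (D : M →ₗ[R] N) (u : M) (v : N)

theorem sub_mem_range_id_sub_comp_iff_exists_add_eq :
    u - C v ∈ LinearMap.range (LinearMap.id - C ∘ₗ D) ↔
      ∃ x y, x + C y = u ∧ y + D x = v := by
  have eliminate (x : M) : x - C (D x) = u - C v ↔ x + C (v - D x) = u := by
    rw [map_sub, add_sub_left_comm, ← eq_sub_iff_add_eq']
  calc
    u - C v ∈ LinearMap.range (LinearMap.id - C ∘ₗ D) ↔ ∃ x, x - C (D x) = u - C v := Iff.rfl
    _ ↔ ∃ x, x + C (v - D x) = u := exists_congr eliminate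
    _ ↔ ∃ x y, x + C y = u ∧ y + D x = v := by
      simp only [← eq_sub_iff_add_eq, exists_eq_right]

theorem sub_mem_range_one_sub_iff_general :
    u - C v ∈ LinearMap.range (LinearMap.id - C ∘ₗ D) ↔
      v - D u ∈ LinearMap.range (LinearMap.id - D ∘ₗ C) := by
  rw [sub_mem_range_id_sub_comp_iff_exists_add_eq, sub_mem_range_id_sub_comp_iff_exists_add_eq,
    exists_comm]
  simp only [and_comm]

end

/-- For a linear operator `C` on a finite-dimensional complex inner product space and
`u, v ∈ V`: `u - C v ∈ ran (1 - C C*)` if and only if `v - C* u ∈ ran (1 - C* C)`. -/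
theorem sub_mem_range_one_sub_iff
    {V : Type*} [NormedAddCommGroup V] [InnerProductSpace ℂ V] [FiniteDimensional ℂ V]
    (C : V →ₗ[ℂ] V) (u v : V) :
    u - C v ∈ LinearMap.range (1 - C * LinearMap.adjoint C) ↔
      v - LinearMap.adjoint C u ∈ LinearMap.range (1 - LinearMap.adjoint C * C) :=
  sub_mem_range_one_sub_iff_general C (LinearMap.adjoint C) u v
end

section
/- Let μ be a real number with 0 < μ < 1 and let C be the 4×4 complex matrix with rows (μ²,0,0,0), (0,0,μ,0), (0,μ,μ²−1,0), (0,0,0,μ²) (the Pusz–Woronowicz twisted CCR matrix), regarded as a linear operator on ℂ² ⊗ ℂ² ≅ ℂ⁴. Then C satisfies the Yang–Baxter equation C^{12} C^{23} C^{12} = C^{23} C^{12} C^{23} as 8×8 matrices. -/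
/-!
The matrix `C` is the case `n = 2`, `(a, b, c, d) = (μ², μ, μ, μ² - 1)` of a deformed flip of
`Rⁿ ⊗ Rⁿ`, which scales each `eᵢ ⊗ eᵢ` by `a` and acts on the plane of `eᵢ ⊗ eⱼ`, `eⱼ ⊗ eᵢ` by a
`2 × 2` block with characteristic polynomial `x² - d x - b c`. Compare the `(i, j, k)`-coordinates
of the two sides of the Yang–Baxter equation for the deformed flip: they depend only on the
relative order of `i`, `j` and `k`, and in each case their difference is a multiple of
`a² - a d - b c`, which vanishes here since `μ⁴ = μ² (μ² - 1) + μ · μ`.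
-/

open Kronecker

/-- `C ⊗ I₂`, acting on `ℂ⁸ ≅ ℂ⁴ ⊗ ℂ²` (lexicographic index identification). -/
noncomputable def kron12 (C : Matrix (Fin 4) (Fin 4) ℂ) : Matrix (Fin 8) (Fin 8) ℂ :=
  Matrix.reindex finProdFinEquiv finProdFinEquiv (C ⊗ₖ (1 : Matrix (Fin 2) (Fin 2) ℂ))

/-- `I₂ ⊗ C`, acting on `ℂ⁸ ≅ ℂ² ⊗ ℂ⁴` (lexicographic index identification). -/
noncomputable def kron23 (C : Matrix (Fin 4) (Fin 4) ℂ) : Matrix (Fin 8) (Fin 8) ℂ :=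
  Matrix.reindex finProdFinEquiv finProdFinEquiv ((1 : Matrix (Fin 2) (Fin 2) ℂ) ⊗ₖ C)

open Matrix

section YangBaxter

variable {ι R : Type*} [DecidableEq ι] [NonAssocSemiring R]

/-- The operator `C ⊗ 1` on the threefold tensor power, whose basis is indexed by
`(ι × ι) × ι`. -/
def leg12 (C : Matrix (ι × ι) (ι × ι) R) : Matrix ((ι × ι) × ι) ((ι × ι) × ι) R :=
  C ⊗ₖ (1 : Matrix ι ι R)

/-- The operator `1 ⊗ C` on the threefold tensor power, reassociated so that it acts on the same
index type `(ι × ι) × ι` as `leg12 C`. -/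
def leg23 (C : Matrix (ι × ι) (ι × ι) R) : Matrix ((ι × ι) × ι) ((ι × ι) × ι) R :=
  ((1 : Matrix ι ι R) ⊗ₖ C).submatrix (Equiv.prodAssoc ι ι ι) (Equiv.prodAssoc ι ι ι)

/-- The Yang–Baxter equation `C¹² C²³ C¹² = C²³ C¹² C²³` in its braid form. -/
def IsYangBaxter [Fintype ι] (C : Matrix (ι × ι) (ι × ι) R) : Prop :=
  leg12 C * leg23 C * leg12 C = leg23 C * leg12 C * leg23 C

theorem leg12_mulVec_apply [Fintype ι] (C : Matrix (ι × ι) (ι × ι) R) (v : (ι × ι) × ι → R)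
    (i j k : ι) :
    (leg12 C *ᵥ v) ((i, j), k) = (C *ᵥ fun p ↦ v (p, k)) (i, j) := by
  simp [leg12, mulVec, dotProduct, Fintype.sum_prod_type, one_apply]

theorem leg23_mulVec_apply [Fintype ι] (C : Matrix (ι × ι) (ι × ι) R) (v : (ι × ι) × ι → R)
    (i j k : ι) :
    (leg23 C *ᵥ v) ((i, j), k) = (C *ᵥ fun p ↦ v ((i, p.1), p.2)) (j, k) := by
  simp [leg23, mulVec, dotProduct, Fintype.sum_prod_type, one_apply]

end YangBaxter

section DeformedFlip

variable {ι R : Type*} [LinearOrder ι]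

/-- Jimbo's deformation of the flip `eᵢ ⊗ eⱼ ↦ eⱼ ⊗ eᵢ` (which is the case `a = b = c = 1`,
`d = 0`), given by its rows. For `i < j` the rows `(i, j)` and `(j, i)` form the block
`(0, b; c, d)`, and the row `(i, i)` is `a` on the diagonal. -/
def deformedFlip [NonAssocSemiring R] (a b c d : R) : Matrix (ι × ι) (ι × ι) R :=
  of fun p ↦
    if p.1 = p.2 then Pi.single p a
    else if p.1 < p.2 then Pi.single p.swap b
    else Pi.single p.swap c + Pi.single p d

theorem deformedFlip_mulVec_apply [Fintype ι] [NonAssocSemiring R] (a b c d : R) (v : ι × ι → R)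
    (i j : ι) :
    (deformedFlip a b c d *ᵥ v) (i, j) =
      if i = j then a * v (i, j)
      else if i < j then b * v (j, i)
      else c * v (j, i) + d * v (i, j) := by
  change (if i = j then _ else if i < j then _ else _) ⬝ᵥ v = _
  split_ifs <;> simp [add_dotProduct]

theorem isYangBaxter_deformedFlip [Fintype ι] [CommRing R] {a b c d : R}
    (h : a ^ 2 = a * d + b * c) :
    IsYangBaxter (deformedFlip a b c d : Matrix (ι × ι) (ι × ι) R) := by
  refine mulVec_injective (funext fun v ↦ ?_)
  ext ⟨⟨i, j⟩, k⟩
  simp only [← mulVec_mulVec, leg12_mulVec_apply, leg23_mulVec_apply, deformedFlip_mulVec_apply]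
  obtain rfl | hij := eq_or_ne i j
  · obtain hik | rfl | hik := lt_trichotomy i k
    · simp only [hik, hik.ne, hik.ne', hik.not_gt, if_true, if_false]
      ring
    · rfl
    · simp only [hik, hik.ne, hik.ne', hik.not_gt, if_true, if_false]
      linear_combination (d * v ((i, i), k)) * h
  obtain rfl | hjk := eq_or_ne j k
  · obtain hij | hij := hij.lt_or_gt
    · simp only [hij, hij.ne, hij.ne', hij.not_gt, if_true, if_false]
      ring
    · simp only [hij, hij.ne, hij.ne', hij.not_gt, if_true, if_false]
      linear_combination (-d * v ((i, j), j)) * h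
  obtain rfl | hik := eq_or_ne i k
  · obtain hij | hij := hij.lt_or_gt <;>
      simp only [hij, hij.ne, hij.ne', hij.not_gt, if_true, if_false] <;> ring
  · simp only [hij, hij.symm, hjk, hjk.symm, hik, if_false]
    split_ifs <;> first | order | ring

end DeformedFlip

/-- The lexicographic identification `((i, j), k) ↦ 4 i + 2 j + k` of the basis of the threefold
tensor power of `ℂ²` with `Fin 8`. -/
def tripleEquiv : (Fin 2 × Fin 2) × Fin 2 ≃ Fin 8 :=
  (finProdFinEquiv.prodCongr (Equiv.refl _)).trans finProdFinEquiv

theorem tripleEquiv_eq_prodAssoc_trans :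
    tripleEquiv = (Equiv.prodAssoc _ _ _).trans
      (((Equiv.refl _).prodCongr finProdFinEquiv).trans finProdFinEquiv) := by
  ext x
  revert x
  decide

theorem kron12_reindex (C : Matrix (Fin 2 × Fin 2) (Fin 2 × Fin 2) ℂ) :
    kron12 (reindex finProdFinEquiv finProdFinEquiv C) =
      reindex tripleEquiv tripleEquiv (leg12 C) :=
  rfl

theorem kron23_reindex (C : Matrix (Fin 2 × Fin 2) (Fin 2 × Fin 2) ℂ) :
    kron23 (reindex finProdFinEquiv finProdFinEquiv C) =
      reindex tripleEquiv tripleEquiv (leg23 C) := by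
  rw [tripleEquiv_eq_prodAssoc_trans]
  ext x y
  simp [kron23, leg23, one_apply]

theorem IsYangBaxter.kron12_mul_kron23_mul_kron12
    {C : Matrix (Fin 2 × Fin 2) (Fin 2 × Fin 2) ℂ} (hC : IsYangBaxter C) :
    kron12 (reindex finProdFinEquiv finProdFinEquiv C) *
        kron23 (reindex finProdFinEquiv finProdFinEquiv C) *
        kron12 (reindex finProdFinEquiv finProdFinEquiv C) =
      kron23 (reindex finProdFinEquiv finProdFinEquiv C) *
        kron12 (reindex finProdFinEquiv finProdFinEquiv C) *
        kron23 (reindex finProdFinEquiv finProdFinEquiv C) := by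
  rw [kron12_reindex, kron23_reindex]
  simp only [reindex_apply, submatrix_mul_equiv]
  rw [hC]

theorem reindex_deformedFlip_fin_two {R : Type*} [NonAssocSemiring R] (a b c d : R) :
    reindex finProdFinEquiv finProdFinEquiv
        (deformedFlip a b c d : Matrix (Fin 2 × Fin 2) (Fin 2 × Fin 2) R) =
      !![a, 0, 0, 0; 0, 0, b, 0; 0, c, d, 0; 0, 0, 0, a] := by
  ext i j
  fin_cases i <;> fin_cases j <;>
    simp [deformedFlip, finProdFinEquiv, Fin.divNat, Fin.modNat]

theorem yangBaxter_puszWoronowicz_general {a b c d : ℂ} (h : a ^ 2 = a * d + b * c) :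
    kron12 !![a, 0, 0, 0; 0, 0, b, 0; 0, c, d, 0; 0, 0, 0, a] *
        kron23 !![a, 0, 0, 0; 0, 0, b, 0; 0, c, d, 0; 0, 0, 0, a] *
        kron12 !![a, 0, 0, 0; 0, 0, b, 0; 0, c, d, 0; 0, 0, 0, a] =
      kron23 !![a, 0, 0, 0; 0, 0, b, 0; 0, c, d, 0; 0, 0, 0, a] *
        kron12 !![a, 0, 0, 0; 0, 0, b, 0; 0, c, d, 0; 0, 0, 0, a] *
        kron23 !![a, 0, 0, 0; 0, 0, b, 0; 0, c, d, 0; 0, 0, 0, a] := by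
  rw [← reindex_deformedFlip_fin_two]
  exact (isYangBaxter_deformedFlip h).kron12_mul_kron23_mul_kron12

/-- The Pusz–Woronowicz twisted CCR matrix `C` with rows
`(μ²,0,0,0), (0,0,μ,0), (0,μ,μ²−1,0), (0,0,0,μ²)`, `0 < μ < 1`, satisfies the
Yang–Baxter equation `C¹² C²³ C¹² = C²³ C¹² C²³`. -/
theorem yangBaxter_puszWoronowicz (μ : ℝ) (hμ₁ : 0 < μ) (hμ₂ : μ < 1) :
    kron12 !![(μ : ℂ) ^ 2, 0, 0, 0; 0, 0, (μ : ℂ), 0; 0, (μ : ℂ), (μ : ℂ) ^ 2 - 1, 0;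
          0, 0, 0, (μ : ℂ) ^ 2] *
        kron23 !![(μ : ℂ) ^ 2, 0, 0, 0; 0, 0, (μ : ℂ), 0; 0, (μ : ℂ), (μ : ℂ) ^ 2 - 1, 0;
          0, 0, 0, (μ : ℂ) ^ 2] *
        kron12 !![(μ : ℂ) ^ 2, 0, 0, 0; 0, 0, (μ : ℂ), 0; 0, (μ : ℂ), (μ : ℂ) ^ 2 - 1, 0;
          0, 0, 0, (μ : ℂ) ^ 2] =
      kron23 !![(μ : ℂ) ^ 2, 0, 0, 0; 0, 0, (μ : ℂ), 0; 0, (μ : ℂ), (μ : ℂ) ^ 2 - 1, 0;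
          0, 0, 0, (μ : ℂ) ^ 2] *
        kron12 !![(μ : ℂ) ^ 2, 0, 0, 0; 0, 0, (μ : ℂ), 0; 0, (μ : ℂ), (μ : ℂ) ^ 2 - 1, 0;
          0, 0, 0, (μ : ℂ) ^ 2] *
        kron23 !![(μ : ℂ) ^ 2, 0, 0, 0; 0, 0, (μ : ℂ), 0; 0, (μ : ℂ), (μ : ℂ) ^ 2 - 1, 0;
          0, 0, 0, (μ : ℂ) ^ 2] :=
  yangBaxter_puszWoronowicz_general (by ring)
end
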